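/- arXiv:1803.03506 — 2 statements merged into one kernel-verified Lean document; each statement's English description precedes it below -/
import Mathlib

section
/- Let (s_n)_{n≥1} be a real sequence that is conditionally positive definite and exponentially bounded. Then there exist γ ∈ ℝ and a finite Borel measure ρ on ℝ with compact support such that s_1 = γ and s_{n+2} = ∫_ℝ x^n dρ(x) for all n ≥ 0; moreover the pair (γ, ρ) with these properties is unique. -/
open Complex MeasureTheory Finset

/-- A complex number is a nonnegative real. -/
def IsNonnegReal (w : ℂ) : Prop := w.im = 0 ∧ 0 ≤ w.re

/-- A real sequence (indexed from 1) is conditionally positive definite. -/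
def CondPosDef (s : ℕ → ℝ) : Prop :=
  ∀ (n : ℕ), 1 ≤ n → ∀ (a : ℕ → ℂ),
    IsNonnegReal (∑ i ∈ Finset.Icc 1 n, ∑ j ∈ Finset.Icc 1 n,
      a i * starRingEnd ℂ (a j) * (s (i + j) : ℂ))

/-- A real sequence (indexed from 1) is exponentially bounded. -/
def ExpBounded (s : ℕ → ℝ) : Prop :=
  ∃ C : ℝ, 0 < C ∧ ∀ n : ℕ, 1 ≤ n → |s n| ≤ C ^ n


open Polynomial in
/-- Positive functional with exponentially bounded moments. -/
def LKGood (C : ℝ) (L : ℝ[X] →ₗ[ℝ] ℝ) : Prop :=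
  (∀ p : ℝ[X], 0 ≤ L (p * p)) ∧ ∃ K : ℝ, ∀ n : ℕ, |L (Polynomial.X ^ n)| ≤ K * C ^ n

open Polynomial in
def LKCone (C : ℝ) (p : ℝ[X]) : Prop := ∀ L : ℝ[X] →ₗ[ℝ] ℝ, LKGood C L → 0 ≤ L p

section LK
open Polynomial

theorem lk_bound {C : ℝ} {L : ℝ[X] →ₗ[ℝ] ℝ} (h : LKGood C L) (p : ℝ[X]) :
    ∃ K : ℝ, ∀ n : ℕ, |L (p * X ^ n)| ≤ K * C ^ n := by
  obtain ⟨K, hK⟩ := h.2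
  induction p using Polynomial.induction_on' with
  | add p q hp hq =>
    obtain ⟨K1, h1⟩ := hp
    obtain ⟨K2, h2⟩ := hq
    refine ⟨K1 + K2, fun n => ?_⟩
    rw [add_mul, map_add, add_mul]
    exact (abs_add_le _ _).trans (add_le_add (h1 n) (h2 n))
  | monomial k a =>
    refine ⟨|a| * (K * C ^ k), fun n => ?_⟩
    have : (monomial k a : ℝ[X]) * X ^ n = a • X ^ (k + n) := by
      rw [← C_mul_X_pow_eq_monomial, smul_eq_C_mul]; ring
    rw [this, map_smul, smul_eq_mul, abs_mul, mul_assoc, mul_assoc, ← pow_add]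
    exact mul_le_mul_of_nonneg_left (hK _) (abs_nonneg _)

theorem lk_good_mul {C : ℝ} {L : ℝ[X] →ₗ[ℝ] ℝ} (h : LKGood C L) (p : ℝ[X])
    (hp : ∀ q : ℝ[X], 0 ≤ L (p * (q * q))) :
    LKGood C (L ∘ₗ LinearMap.mulLeft ℝ p) :=
  ⟨fun q => by simpa using hp q, by simpa using lk_bound h p⟩

theorem lk_cone_mul {C : ℝ} {p q : ℝ[X]} (hp : LKCone C p) (hq : LKCone C q) :
    LKCone C (p * q) := by
  intro L hL
  have h1 : LKGood C (L ∘ₗ LinearMap.mulLeft ℝ p) := by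
    refine lk_good_mul hL p fun r => ?_
    have h2 : LKGood C (L ∘ₗ LinearMap.mulLeft ℝ (r * r)) := by
      refine lk_good_mul hL _ fun t => ?_
      have := hL.1 (r * t)
      convert this using 2
      ring
    have := hp _ h2
    simp only [LinearMap.comp_apply, LinearMap.mulLeft_apply] at this
    rwa [mul_comm]
  simpa using hq _ h1

theorem lk_cone_add {C : ℝ} {p q : ℝ[X]} (hp : LKCone C p) (hq : LKCone C q) :
    LKCone C (p + q) := by
  intro L hL
  rw [map_add]
  exact add_nonneg (hp L hL) (hq L hL)

theorem lk_cone_sq {C : ℝ} (p : ℝ[X]) : LKCone C (p * p) := fun _ hL => hL.1 p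

theorem lk_cone_C {c a : ℝ} (ha : 0 ≤ a) : LKCone c (C a) := by
  have : (C a : ℝ[X]) = C (√a) * C (√a) := by
    rw [← C_mul, Real.mul_self_sqrt ha]
  rw [this]
  exact lk_cone_sq _

theorem lk_cs {C : ℝ} {L : ℝ[X] →ₗ[ℝ] ℝ} (h : LKGood C L) (p q : ℝ[X]) :
    L (p * q) ^ 2 ≤ L (p * p) * L (q * q) := by
  have := discrim_le_zero (a := L (p * p)) (b := 2 * L (p * q)) (c := L (q * q)) (fun x => by
    have h1 := h.1 (x • p + q)
    have : (x • p + q) * (x • p + q) = (x * x) • (p * p) + (2 * x) • (p * q) + q * q := by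
      simp only [smul_eq_C_mul, C_mul, map_ofNat]; ring
    rw [this] at h1
    simp only [map_add, map_smul, smul_eq_mul] at h1
    linarith)
  unfold discrim at this
  linarith

theorem lk_ratio {u : ℕ → ℝ} {K D : ℝ} (hD : 0 < D) (h0 : ∀ k, 0 ≤ u k)
    (hu : ∀ k, u (k + 1) ^ 2 ≤ u k * u (k + 2)) (hb : ∀ k, u k ≤ K * D ^ k) :
    u 1 ≤ D * u 0 := by
  by_contra! hc
  have hu0 : 0 < u 0 := by
    rcases (h0 0).lt_or_eq with h | h
    · exact h
    · have := hu 0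
      rw [← h] at this hc
      simp at this hc
      linarith
  set r := u 1 / u 0 with hr
  have hrD : D < r := by rw [hr, lt_div_iff₀ hu0]; exact hc
  have hr0 : 0 < r := hD.trans hrD
  have key : ∀ k, 0 < u k ∧ r * u k ≤ u (k + 1) := by
    intro k
    induction k with
    | zero => exact ⟨hu0, by rw [hr]; field_simp; simp⟩
    | succ k ih =>
      obtain ⟨h1, h2⟩ := ih
      have h3 : 0 < u (k + 1) := lt_of_lt_of_le (by positivity) h2
      refine ⟨h3, ?_⟩
      have h4 := hu k
      by_contra! h5
      have : u k * u (k + 2) < u k * (r * u (k + 1)) := mul_lt_mul_of_pos_left h5 h1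
      nlinarith
  have key2 : ∀ k, u 0 * r ^ k ≤ u k := by
    intro k
    induction k with
    | zero => simp
    | succ k ih =>
      have := (key k).2
      calc u 0 * r ^ (k + 1) = r * (u 0 * r ^ k) := by ring
        _ ≤ r * u k := by gcongr
        _ ≤ _ := this
  have h1 : 1 < r / D := by rwa [one_lt_div hD]
  obtain ⟨k, hk⟩ := pow_unbounded_of_one_lt (K / u 0) h1
  have := (key2 k).trans (hb k)
  rw [div_pow, div_lt_div_iff₀ hu0 (by positivity)] at hk
  linarith

theorem lk_X_sq {c : ℝ} (hc : 0 < c) {L : ℝ[X] →ₗ[ℝ] ℝ} (h : LKGood c L) :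
    L (X * X) ≤ c ^ 2 * L 1 := by
  obtain ⟨K, hK⟩ := h.2
  have := lk_ratio (u := fun k => L (X ^ k * X ^ k)) (K := K) (D := c ^ 2) (by positivity)
    (fun k => h.1 _) (fun k => by
      have h1 := lk_cs h (X ^ k) (X ^ (k + 2))
      have e : (X ^ k * X ^ (k + 2) : ℝ[X]) = X ^ (k + 1) * X ^ (k + 1) := by ring
      rw [e] at h1
      exact h1) (fun k => by
      have := (le_abs_self _).trans (hK (k + k))
      rw [← pow_add]
      rwa [pow_add c, ← mul_pow, ← sq] at this)
  simpa using this

theorem lk_abs_X {c : ℝ} (hc : 0 < c) {L : ℝ[X] →ₗ[ℝ] ℝ} (h : LKGood c L) :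
    |L X| ≤ c * L 1 := by
  have h1 := lk_cs h 1 X
  have h2 := lk_X_sq hc h
  have h3 := h.1 1
  simp only [mul_one, one_mul] at h1 h3
  apply abs_le_of_sq_le_sq _ (by positivity)
  nlinarith

theorem lk_cone_sub {c r : ℝ} (hc : 0 < c) (hr : c ≤ r) : LKCone c (C r - X) := by
  intro L hL
  have h1 := abs_le.1 (lk_abs_X hc hL)
  have h3 := hL.1 1
  have : (C r - X : ℝ[X]) = r • 1 - X := by simp [smul_eq_C_mul]
  rw [this, map_sub, map_smul, smul_eq_mul]
  simp only [mul_one] at h3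
  nlinarith

theorem lk_cone_add' {c r : ℝ} (hc : 0 < c) (hr : r ≤ -c) : LKCone c (X - C r) := by
  intro L hL
  have h1 := abs_le.1 (lk_abs_X hc hL)
  have h3 := hL.1 1
  have : (X - C r : ℝ[X]) = X - r • 1 := by simp [smul_eq_C_mul]
  rw [this, map_sub, map_smul, smul_eq_mul]
  simp only [mul_one] at h3
  nlinarith

/-- Nonnegativity off one point of a nondegenerate interval is nonnegativity. -/
theorem lk_nonneg_of_ne {c r : ℝ} (hc : 0 < c) {q : ℝ[X]}
    (h : ∀ x ∈ Set.Icc (-c) c, x ≠ r → 0 ≤ q.eval x) :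
    ∀ x ∈ Set.Icc (-c) c, 0 ≤ q.eval x := by
  have hcl : IsClosed {x : ℝ | 0 ≤ q.eval x} := isClosed_le continuous_const q.continuous
  have hd : Dense ({r}ᶜ : Set ℝ) := dense_compl_singleton r
  have h1 : Set.Ioo (-c) c ⊆ closure (Set.Ioo (-c) c ∩ {r}ᶜ) :=
    hd.open_subset_closure_inter isOpen_Ioo
  have h2 : closure (Set.Ioo (-c) c) ⊆ {x : ℝ | 0 ≤ q.eval x} := by
    refine (closure_minimal h1 isClosed_closure).trans (closure_minimal ?_ hcl)
    exact fun x hx => h x (Set.Ioo_subset_Icc_self hx.1) hx.2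
  rw [closure_Ioo (by linarith)] at h2
  exact h2

theorem lk_main {c : ℝ} (hc : 0 < c) : ∀ (n : ℕ) (p : ℝ[X]), p.natDegree ≤ n →
    (∀ x ∈ Set.Icc (-c) c, 0 ≤ p.eval x) → LKCone c p := by
  intro n
  induction n using Nat.strong_induction_on with
  | _ n ih =>
  intro p hpn hp
  by_cases hdeg : p.natDegree = 0
  · rw [eq_C_of_natDegree_eq_zero hdeg] at hp ⊢
    have := hp 0 ⟨by linarith, hc.le⟩
    rw [eval_C] at this
    exact lk_cone_C this
  have hp0 : p ≠ 0 := by rintro rfl; simp at hdeg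
  -- general division step
  have step : ∀ d q : ℝ[X], p = d * q → 0 < d.natDegree → LKCone c d →
      (∀ x ∈ Set.Icc (-c) c, 0 ≤ q.eval x) → LKCone c p := by
    intro d q hpd hd0 hd hq
    have hd' : d ≠ 0 := by rintro rfl; simp at hd0
    have hq' : q ≠ 0 := by rintro rfl; simp at hpd; exact hp0 hpd
    have := natDegree_mul hd' hq'
    rw [← hpd] at this
    rw [hpd]
    exact lk_cone_mul hd (ih (n - 1) (by omega) q (by omega) hq)
  obtain ⟨z, hz⟩ := IsAlgClosed.exists_aeval_eq_zero ℂ p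
    (by rw [degree_eq_natDegree hp0]; exact_mod_cast hdeg)
  by_cases him : z.im = 0
  · have hroot : p.eval z.re = 0 := by
      have hz' : z = algebraMap ℝ ℂ z.re := by
        apply Complex.ext <;> simp [him]
      rw [hz', aeval_algebraMap_apply] at hz
      simpa [aeval_def] using hz
    set r := z.re
    obtain ⟨q, hq⟩ := dvd_iff_isRoot.2 hroot
    have hev : ∀ x, p.eval x = (x - r) * q.eval x := fun x => by rw [hq]; simp
    rcases le_or_gt c r with h1 | h1
    · refine step (C r - X) (-q) (by rw [hq]; ring) ?_ (lk_cone_sub hc h1) ?_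
      · rw [← neg_sub, natDegree_neg, natDegree_X_sub_C]; exact one_pos
      · apply lk_nonneg_of_ne (r := r) hc
        intro x hx hxr
        have := hp x hx
        rw [hev] at this
        rw [eval_neg]
        have h2 : x < r := lt_of_le_of_ne (hx.2.trans h1) hxr
        by_contra! h3
        nlinarith
    rcases le_or_gt r (-c) with h2 | h2
    · refine step (X - C r) q hq ?_ (lk_cone_add' hc h2) ?_
      · rw [natDegree_X_sub_C]; exact one_pos
      · apply lk_nonneg_of_ne (r := r) hc
        intro x hx hxr
        have := hp x hx
        rw [hev] at this
        have h2 : r < x := lt_of_le_of_ne (h2.trans hx.1) (Ne.symm hxr)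
        by_contra! h3
        nlinarith
    · have hqr : q.eval r = 0 := by
        have hcont : Filter.Tendsto (fun x => q.eval x) (nhds r) (nhds (q.eval r)) :=
          q.continuous.tendsto r
        apply le_antisymm
        · have hl := hcont.mono_left (nhdsWithin_le_nhds (s := Set.Iio r))
          refine le_of_tendsto hl ?_
          filter_upwards [Ioo_mem_nhdsLT h2] with x hx
          have := hp x ⟨hx.1.le, hx.2.le.trans h1.le⟩
          rw [hev] at this
          by_contra! h3
          nlinarith [hx.2]
        · have hl := hcont.mono_left (nhdsWithin_le_nhds (s := Set.Ioi r))
          refine ge_of_tendsto hl ?_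
          filter_upwards [Ioo_mem_nhdsGT h1] with x hx
          have := hp x ⟨h2.le.trans hx.1.le, hx.2.le⟩
          rw [hev] at this
          by_contra! h3
          nlinarith [hx.1]
      obtain ⟨t, ht⟩ := dvd_iff_isRoot.2 hqr
      refine step ((X - C r) * (X - C r)) t (by rw [hq, ht]; ring) ?_ (lk_cone_sq _) ?_
      · rw [natDegree_mul (X_sub_C_ne_zero r) (X_sub_C_ne_zero r), natDegree_X_sub_C]; norm_num
      · apply lk_nonneg_of_ne (r := r) hc
        intro x hx hxr
        have := hp x hx
        rw [hev, ht] at this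
        simp only [eval_mul, eval_sub, eval_X, eval_C] at this
        have h4 : 0 < (x - r) * (x - r) := mul_self_pos.2 (sub_ne_zero.2 hxr)
        rw [← mul_assoc] at this
        exact nonneg_of_mul_nonneg_right this h4
  · obtain ⟨q, hq⟩ := quadratic_dvd_of_aeval_eq_zero_im_ne_zero p hz him
    have hd : (X ^ 2 - C (2 * z.re) * X + C (‖z‖ ^ 2) : ℝ[X])
        = (X - C z.re) * (X - C z.re) + C z.im * C z.im := by
      rw [← Complex.normSq_eq_norm_sq, Complex.normSq_apply]
      simp only [C_add, C_mul, map_ofNat]; ring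
    rw [hd] at hq
    refine step _ q hq ?_ (lk_cone_add (lk_cone_sq _) (lk_cone_sq _)) ?_
    · rw [← C_mul, natDegree_add_C, natDegree_mul (X_sub_C_ne_zero _) (X_sub_C_ne_zero _),
        natDegree_X_sub_C]; norm_num
    · intro x hx
      have := hp x hx
      rw [hq] at this
      simp only [eval_mul, eval_sub, eval_X, eval_C, eval_add] at this
      have h4 : 0 < (x - z.re) * (x - z.re) + z.im * z.im :=
        add_pos_of_nonneg_of_pos (mul_self_nonneg _) (mul_self_pos.2 him)
      exact nonneg_of_mul_nonneg_right this h4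

/-- Existence of a representing measure. -/
theorem lk_exists {c : ℝ} (hc : 0 < c) {L : ℝ[X] →ₗ[ℝ] ℝ} (hL : LKGood c L) :
    ∃ ρ : Measure ℝ, IsFiniteMeasure ρ ∧ ρ (Set.Icc (-c) c)ᶜ = 0 ∧
      ∀ p : ℝ[X], L p = ∫ x, p.eval x ∂ρ := by
  let I : Set ℝ := Set.Icc (-c) c
  let φ : ℝ[X] →ₗ[ℝ] C(I, ℝ) := (toContinuousMapOnAlgHom I).toLinearMap
  have hφ : ∀ (p : ℝ[X]) (x : I), φ p x = p.eval (x : ℝ) := fun p x => rfl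
  have hinj : Function.Injective φ := by
    intro p q hpq
    refine Polynomial.eq_of_infinite_eval_eq p q ?_
    refine (Set.Icc_infinite (show -c < c by linarith)).mono ?_
    intro x hx
    have := congrArg (fun f : C(I, ℝ) => f ⟨x, hx⟩) hpq
    exact this
  let e := LinearEquiv.ofInjective φ hinj
  let f : C(I, ℝ) →ₗ.[ℝ] ℝ := ⟨LinearMap.range φ, L ∘ₗ e.symm.toLinearMap⟩
  let S : PointedCone ℝ C(I, ℝ) := PointedCone.positive ℝ C(I, ℝ)
  have hS : ∀ g : C(I, ℝ), g ∈ S ↔ 0 ≤ g := fun g => PointedCone.mem_positive _ _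
  have hfe : ∀ p : ℝ[X], f (e p) = L p := fun p => by
    change L (e.symm (e p)) = L p
    rw [LinearEquiv.symm_apply_apply]
  have hec : ∀ p : ℝ[X], ((e p : LinearMap.range φ) : C(I, ℝ)) = φ p := fun p => rfl
  obtain ⟨g, hg1, hg2⟩ := riesz_extension S f (by
      intro x hx
      obtain ⟨p, rfl⟩ := e.surjective x
      rw [hfe]
      rw [hS, hec] at hx
      exact lk_main hc _ p le_rfl (fun y hy => hx ⟨y, hy⟩) L hL) (by
      intro y
      refine ⟨e (C ‖y‖), ?_⟩
      rw [hS, hec]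
      intro x
      have h1 := (abs_le.1 (y.norm_coe_le_norm x)).1
      have h2 : φ (C ‖y‖) x = ‖y‖ := by rw [hφ, eval_C]
      change 0 ≤ φ (C ‖y‖) x + y x
      rw [h2]
      linarith)
  let Λ0 : CompactlySupportedContinuousMap I ℝ →ₗ[ℝ] ℝ :=
    { toFun := fun f => g f.toContinuousMap
      map_add' := fun a b => g.map_add a.toContinuousMap b.toContinuousMap
      map_smul' := fun r a => g.map_smul r a.toContinuousMap }
  let Λ : CompactlySupportedContinuousMap I ℝ →ₚ[ℝ] ℝ :=
    PositiveLinearMap.mk₀ Λ0 (fun a ha => hg2 _ ((hS _).2 ha))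
  let μ := RealRMK.rieszMeasure Λ
  have hμ : ∀ p : ℝ[X], ∫ x : I, p.eval (x : ℝ) ∂μ = L p := by
    intro p
    have h1 := RealRMK.integral_rieszMeasure Λ (CompactlySupportedContinuousMap.continuousMapEquiv (φ p))
    have h2 : Λ (CompactlySupportedContinuousMap.continuousMapEquiv (φ p)) = g (φ p) := rfl
    rw [h2, ← hec, hg1, hfe] at h1
    exact h1
  have hfin : IsFiniteMeasure μ := inferInstance
  have hI : MeasurableSet I := measurableSet_Icc
  refine ⟨μ.map Subtype.val, inferInstance, ?_, ?_⟩
  · rw [Measure.map_apply measurable_subtype_coe hI.compl]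
    simp [I]
  · intro p
    rw [(MeasurableEmbedding.subtype_coe hI).integral_map, hμ]

/-- Integrals of polynomials against a compactly supported measure approximate. -/
theorem lk_unique {μ ν : Measure ℝ} [IsFiniteMeasure μ] [IsFiniteMeasure ν]
    (hμ : ∃ K : Set ℝ, IsCompact K ∧ μ Kᶜ = 0) (hν : ∃ K : Set ℝ, IsCompact K ∧ ν Kᶜ = 0)
    (h : ∀ n : ℕ, ∫ x : ℝ, x ^ n ∂μ = ∫ x : ℝ, x ^ n ∂ν) : μ = ν := by
  obtain ⟨K1, hK1, h1⟩ := hμ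
  obtain ⟨K2, hK2, h2⟩ := hν
  obtain ⟨M, hM⟩ := (hK1.union hK2).isBounded.subset_closedBall 0
  rw [Real.closedBall_eq_Icc] at hM
  have hsupp : ∀ (ρ : Measure ℝ) (K : Set ℝ), ρ Kᶜ = 0 → K ⊆ K1 ∪ K2 →
      ∀ᵐ x ∂ρ, x ∈ Set.Icc (0 - M) (0 + M) := by
    intro ρ K h hK
    have : ∀ᵐ x ∂ρ, x ∈ K := by rw [ae_iff]; exact h
    filter_upwards [this] with x hx
    exact hM (hK hx)
  have aμ := hsupp μ K1 h1 Set.subset_union_left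
  have aν := hsupp ν K2 h2 Set.subset_union_right
  have hint : ∀ (ρ : Measure ℝ) [IsFiniteMeasure ρ], (∀ᵐ x ∂ρ, x ∈ Set.Icc (0 - M) (0 + M)) →
      ∀ f : ℝ → ℝ, Continuous f → Integrable f ρ := by
    intro ρ _ ha f hf
    obtain ⟨B, hB⟩ := (isCompact_Icc (a := 0 - M) (b := 0 + M)).exists_bound_of_continuousOn
      hf.continuousOn
    refine Integrable.of_bound hf.aestronglyMeasurable B ?_
    filter_upwards [ha] with x hx using hB x hx
  have hpoly : ∀ p : ℝ[X], ∫ x, p.eval x ∂μ = ∫ x, p.eval x ∂ν := by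
    intro p
    induction p using Polynomial.induction_on' with
    | add p q hp hq =>
      simp only [eval_add]
      rw [integral_add (hint μ aμ _ p.continuous) (hint μ aμ _ q.continuous),
        integral_add (hint ν aν _ p.continuous) (hint ν aν _ q.continuous), hp, hq]
    | monomial k a =>
      simp only [eval_monomial, integral_const_mul, h]
  have hclose : ∀ (ρ : Measure ℝ) [IsFiniteMeasure ρ], (∀ᵐ x ∂ρ, x ∈ Set.Icc (0 - M) (0 + M)) →
      ∀ (f : ℝ → ℝ) (p : ℝ[X]) (ε : ℝ), Continuous f →
      (∀ x ∈ Set.Icc (0 - M) (0 + M), |p.eval x - f x| < ε) →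
      |∫ x, p.eval x ∂ρ - ∫ x, f x ∂ρ| ≤ ε * ρ.real Set.univ := by
    intro ρ _ ha f p ε hf hε
    rw [← integral_sub (hint ρ ha _ p.continuous) (hint ρ ha _ hf)]
    have hae : ∀ᵐ x ∂ρ, ‖p.eval x - f x‖ ≤ ε := by
      filter_upwards [ha] with x hx using (hε x hx).le
    exact norm_integral_le_of_norm_le_const hae
  apply ext_of_forall_integral_eq_of_IsFiniteMeasure
  intro f
  set T := μ.real Set.univ + ν.real Set.univ with hT
  have hT0 : 0 ≤ T := by positivity
  refine eq_of_forall_dist_le fun δ hδ => ?_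
  obtain ⟨p, hp⟩ := exists_polynomial_near_of_continuousOn (0 - M) (0 + M) f
    f.continuous.continuousOn (δ / (T + 1)) (by positivity)
  have e1 := abs_le.1 (hclose μ aμ f p _ f.continuous hp)
  have e2 := abs_le.1 (hclose ν aν f p _ f.continuous hp)
  rw [hpoly] at e1
  have e3 : δ / (T + 1) * μ.real Set.univ + δ / (T + 1) * ν.real Set.univ ≤ δ := by
    rw [← mul_add, ← hT, div_mul_eq_mul_div, div_le_iff₀ (by positivity)]
    nlinarith
  rw [Real.dist_eq, abs_le]
  constructor <;> linarith [e1.1, e1.2, e2.1, e2.2]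

theorem lk_good_of_seq (s : ℕ → ℝ) (hcpd : CondPosDef s) {c : ℝ}
    (hexp : ∀ n : ℕ, 1 ≤ n → |s n| ≤ c ^ n) :
    ∃ L : ℝ[X] →ₗ[ℝ] ℝ, LKGood c L ∧ ∀ n, L (X ^ n) = s (n + 2) := by
  let L : ℝ[X] →ₗ[ℝ] ℝ := Polynomial.lsum fun n => s (n + 2) • LinearMap.id
  have hX : ∀ n, L (X ^ n) = s (n + 2) := by
    intro n
    simp [L, Polynomial.lsum_apply, X_pow_eq_monomial, sum_monomial_index]
  refine ⟨L, ⟨fun p => ?_, c ^ 2, fun n => ?_⟩, hX⟩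
  · set N := p.natDegree + 1
    have hp : p = ∑ i ∈ Finset.range N, p.coeff i • X ^ i := by
      conv_lhs => rw [p.as_sum_range_C_mul_X_pow]
      simp only [smul_eq_C_mul, N]
    have hpp : L (p * p) = ∑ i ∈ Finset.range N, ∑ j ∈ Finset.range N,
        p.coeff i * p.coeff j * s (i + 1 + (j + 1)) := by
      conv_lhs => rw [hp]
      rw [Finset.sum_mul_sum, map_sum]
      refine Finset.sum_congr rfl fun i _ => ?_
      rw [map_sum]
      refine Finset.sum_congr rfl fun j _ => ?_
      rw [smul_mul_smul_comm, map_smul, ← pow_add, hX, smul_eq_mul]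
      congr 2
      ring
    have h := (hcpd N (by omega) (fun i => (p.coeff (i - 1) : ℂ))).2
    have hI : ∀ F : ℕ → ℂ, ∑ i ∈ Finset.Icc 1 N, F i = ∑ i ∈ Finset.range N, F (i + 1) := by
      intro F
      rw [Finset.range_eq_Ico, Finset.sum_Ico_add' F 0 N 1]
      rfl
    simp only [hI, Nat.add_sub_cancel, Complex.conj_ofReal] at h
    rw [hpp]
    exact_mod_cast h
  · rw [hX, ← pow_add, add_comm 2 n]
    exact hexp _ (by omega)

end LK

theorem levy_khintchine_representation_exists_unique
    (s : ℕ → ℝ) (hcpd : CondPosDef s) (hexp : ExpBounded s) :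
    ∃ (γ : ℝ) (ρ : Measure ℝ),
      IsFiniteMeasure ρ ∧
      (∃ K : Set ℝ, IsCompact K ∧ ρ Kᶜ = 0) ∧
      s 1 = γ ∧ (∀ n : ℕ, s (n + 2) = ∫ x : ℝ, x ^ n ∂ρ) ∧
      (∀ (γ' : ℝ) (ρ' : Measure ℝ),
        IsFiniteMeasure ρ' →
        (∃ K : Set ℝ, IsCompact K ∧ ρ' Kᶜ = 0) →
        s 1 = γ' → (∀ n : ℕ, s (n + 2) = ∫ x : ℝ, x ^ n ∂ρ') →
        γ' = γ ∧ ρ' = ρ) := by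
  obtain ⟨c, hc, hb⟩ := hexp
  obtain ⟨L, hL, hX⟩ := lk_good_of_seq s hcpd hb
  obtain ⟨ρ, hfin, hK, hρ⟩ := lk_exists hc hL
  have hm : ∀ n : ℕ, s (n + 2) = ∫ x : ℝ, x ^ n ∂ρ := by
    intro n
    rw [← hX, hρ]
    simp
  refine ⟨s 1, ρ, hfin, ⟨_, isCompact_Icc, hK⟩, rfl, hm, ?_⟩
  intro γ' ρ' hfin' hK' hγ hm'
  refine ⟨hγ.symm, lk_unique hK' ⟨_, isCompact_Icc, hK⟩ fun n => ?_⟩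
  rw [← hm, ← hm']
end

section
/- Let (s_n)_{n≥1} and (t_n)_{n≥1} be real sequences, each conditionally positive definite and exponentially bounded. Then the pointwise (Hadamard) product sequence (s_n · t_n)_{n≥1} is again conditionally positive definite and exponentially bounded. -/
open Complex Finset

open scoped ComplexOrder Matrix in
lemma quad_form_eq (s : ℕ → ℝ) (n : ℕ) (a : ℕ → ℂ) :
    (star (fun i : Finset.Icc 1 n => star (a i))) ⬝ᵥ
      ((Matrix.of fun i j : Finset.Icc 1 n => ((s ((i : ℕ) + (j : ℕ)) : ℝ) : ℂ)) *ᵥ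
        (fun i : Finset.Icc 1 n => star (a i))) =
    ∑ i ∈ Finset.Icc 1 n, ∑ j ∈ Finset.Icc 1 n,
      a i * starRingEnd ℂ (a j) * (s (i + j) : ℂ) := by
  rw [← Finset.sum_coe_sort (Finset.Icc 1 n)]
  simp only [dotProduct, Matrix.mulVec, Matrix.of_apply, Finset.mul_sum]
  refine Finset.sum_congr rfl fun i _ => ?_
  rw [← Finset.sum_coe_sort (Finset.Icc 1 n)]
  refine Finset.sum_congr rfl fun j _ => ?_
  simp only [Pi.star_apply, star_star, starRingEnd_apply]
  ring

open scoped ComplexOrder Matrix in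
lemma condPosDef_iff (s : ℕ → ℝ) : CondPosDef s ↔ ∀ n, 1 ≤ n →
    (Matrix.of fun i j : Finset.Icc 1 n => ((s ((i : ℕ) + (j : ℕ)) : ℝ) : ℂ)).PosSemidef := by
  refine forall_congr' fun n => forall_congr' fun _ => ?_
  rw [Matrix.posSemidef_iff_dotProduct_mulVec]
  constructor
  · intro h
    refine ⟨?_, fun x => ?_⟩
    · ext i j
      simp [Matrix.conjTranspose_apply, add_comm]
    · have h1 := h (fun i => if hi : i ∈ Finset.Icc 1 n then star (x ⟨i, hi⟩) else 0)
      rw [← quad_form_eq] at h1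
      have hx : (fun i : Finset.Icc 1 n => star ((fun i : ℕ => if hi : i ∈ Finset.Icc 1 n then
          star (x ⟨i, hi⟩) else 0) i)) = x := by
        funext i
        simp only [i.2, dif_pos, star_star]
      rw [hx] at h1
      exact Complex.nonneg_iff.2 ⟨h1.2, h1.1.symm⟩
  · rintro ⟨_, h⟩ a
    have h1 := h (fun i => star (a i))
    rw [quad_form_eq] at h1
    have h2 := Complex.nonneg_iff.1 h1
    exact ⟨h2.2.symm, h2.1⟩

theorem hadamard_product_cond_posdef_and_exp_bounded
    (s t : ℕ → ℝ)
    (hs_cpd : CondPosDef s) (hs_exp : ExpBounded s)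
    (ht_cpd : CondPosDef t) (ht_exp : ExpBounded t) :
    CondPosDef (fun n => s n * t n) ∧ ExpBounded (fun n => s n * t n) := by
  constructor
  · rw [condPosDef_iff] at *
    intro n hn
    have h := (hs_cpd n hn).hadamard (ht_cpd n hn)
    have e : (Matrix.of fun i j : Finset.Icc 1 n =>
        ((s ((i : ℕ) + (j : ℕ)) * t ((i : ℕ) + (j : ℕ)) : ℝ) : ℂ)) =
        (Matrix.of fun i j : Finset.Icc 1 n => ((s ((i : ℕ) + (j : ℕ)) : ℝ) : ℂ)).hadamard
          (Matrix.of fun i j : Finset.Icc 1 n => ((t ((i : ℕ) + (j : ℕ)) : ℝ) : ℂ)) := by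
      ext i j
      simp [Matrix.hadamard]
    rw [e]
    exact h
  · obtain ⟨C, hC, h⟩ := hs_exp
    obtain ⟨D, hD, h'⟩ := ht_exp
    refine ⟨C * D, mul_pos hC hD, fun n hn => ?_⟩
    rw [abs_mul, mul_pow]
    exact mul_le_mul (h n hn) (h' n hn) (abs_nonneg _) (by positivity)
end
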